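/- Let X be a normed space, f : X → ℝ ∪ {−∞, +∞}, u ∈ X with f(u) ∈ ℝ, and g : X → ℝ Lipschitz continuous. Then ∂(f+g)(u) ⊆ ∂f(u) + ∂g(u). If moreover g is of class C¹, then ∂(f+g)(u) = ∂f(u) + ∂g(u) and ∂g(u) = {g'(u)}. -/

import Mathlib

open Set ENNReal Pointwise

noncomputable section

/-- Ball-intersect-epigraph of `f` around `(u, c)` of radius `σ`, in the metric
`dist((w,μ),(w',μ')) = sqrt(dist(w,w')² + (μ-μ')²)` on `E × ℝ`. -/
def epiBallM {E : Type*} [MetricSpace E] (f : E → EReal) (u : E) (c σ : ℝ) : Set (E × ℝ) :=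
  {w | Real.sqrt ((dist w.1 u) ^ 2 + (w.2 - c) ^ 2) < σ ∧ f w.1 ≤ (w.2 : EReal)}

/-- `u` (with `f u = c ∈ ℝ`) is `δ`-regular for `f`. -/
def IsDeltaRegular {E : Type*} [MetricSpace E] (f : E → EReal) (u : E) (c : ℝ) (δ : ℝ) : Prop :=
  ∃ σ > 0, ∃ ν : E × ℝ → ℝ → E,
    ContinuousOn (fun z : (E × ℝ) × ℝ => ν z.1 z.2) (epiBallM f u c σ ×ˢ Icc 0 σ) ∧
    ∀ w ∈ epiBallM f u c σ, ∀ t ∈ Icc (0:ℝ) σ,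
      dist (ν w t) w.1 ≤ t ∧ f (ν w t) ≤ ((w.2 - δ * t : ℝ) : EReal)

/-- The weak slope `|df|(u)`, an element of `[0,∞]`. -/
def weakSlope {E : Type*} [MetricSpace E] (f : E → EReal) (u : E) (c : ℝ) : ℝ≥0∞ :=
  sSup {d : ℝ≥0∞ | ∃ δ : ℝ, 0 < δ ∧ IsDeltaRegular f u c δ ∧ d = ENNReal.ofReal δ}

variable {X : Type*} [NormedAddCommGroup X] [NormedSpace ℝ X]

/-- The set of `r ∈ ℝ` entering the definition of `f⁰_ε(u;v)`. -/
def gdirSetN (f : X → EReal) (u : X) (c : ℝ) (v : X) (ε : ℝ) : Set ℝ :=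
  {r | ∃ δ > 0, ∃ ν : X × ℝ → ℝ → X,
    ContinuousOn (fun z : (X × ℝ) × ℝ => ν z.1 z.2) (epiBallM f u c δ ×ˢ Ioc 0 δ) ∧
    ∀ w ∈ epiBallM f u c δ, ∀ t ∈ Ioc (0:ℝ) δ,
      ‖ν w t - v‖ < ε ∧ f (w.1 + t • ν w t) ≤ ((w.2 + r * t : ℝ) : EReal)}

/-- `f⁰_ε(u;v)`. -/
def gdirEps (f : X → EReal) (u : X) (c : ℝ) (v : X) (ε : ℝ) : EReal :=
  sInf ((fun r : ℝ => (r : EReal)) '' gdirSetN f u c v ε)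

/-- `f⁰(u;v) = sup_{ε>0} f⁰_ε(u;v)`. -/
def gdir (f : X → EReal) (u : X) (c : ℝ) (v : X) : EReal :=
  ⨆ ε : {e : ℝ // 0 < e}, gdirEps f u c v ε.1

/-- The Campa–Degiovanni subdifferential `∂f(u)`. -/
def subdiff (f : X → EReal) (u : X) (c : ℝ) : Set (X →L[ℝ] ℝ) :=
  {α | ∀ v : X, ((α v : ℝ) : EReal) ≤ gdir f u c v}

/-!
The bounds `f⁰(u;v) ≤ r` cut out a convex cone of pairs `(v, r)`, and `∂f(u)` consists of the
continuous linear functionals lying below that cone. If `g` is Lipschitz near `u`, then `g⁰(u;·)` is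
Clarke's directional derivative, which is finite and is an upper bound along every direction field
close to `v`; hence `(f + g)⁰(u;v) ≤ f⁰(u;v) + g⁰(u;v)`. A functional `α ≤ f⁰ + g⁰` then splits as
`(α - β) + β` by Hahn–Banach, applied to the sum of the cones of `g⁰` and of `x ↦ f⁰(-x) + α x`.
If `g` is strictly differentiable at `u`, its Clarke derivative is `g'(u)`, and the reverse
inclusion is the inequality above for the pair `f + g`, `-g`.
-/

open Filter Topology

/-- The filter of pairs `((w, μ), t)` with `(w, μ) → (u, c)` inside the epigraph of `f` and
`t → 0⁺`, in terms of which the quantifiers over `δ` in `gdirSetN` are expressed. -/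
def epiFilter {E : Type*} [TopologicalSpace E] (f : E → EReal) (u : E) (c : ℝ) :
    Filter ((E × ℝ) × ℝ) :=
  𝓝[{w | f w.1 ≤ w.2}] (u, c) ×ˢ 𝓝[>] 0

/-- Clarke's directional derivative `limsup_{w → u, t → 0⁺} (g (w + t v) - g w) / t`, as an
extended real number. -/
def clarkeDeriv (g : X → ℝ) (u v : X) : EReal :=
  limsup (fun p : X × ℝ => ((p.2⁻¹ * (g (p.1 + p.2 • v) - g p.1) : ℝ) : EReal)) (𝓝 u ×ˢ 𝓝[>] 0)

section HahnBanach

variable {E : Type*} [SeminormedAddCommGroup E] [NormedSpace ℝ E]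

theorem exists_continuousLinearMap_le_of_pointedCone {C : PointedCone ℝ (E × ℝ)} {K : ℝ}
    (nonneg : ∀ t : ℝ, ((0 : E), t) ∈ C → 0 ≤ t) (norm_mem : ∀ v, (v, K * ‖v‖) ∈ C) :
    ∃ β : E →L[ℝ] ℝ, ∀ p ∈ C, β p.1 ≤ p.2 := by
  let vertical := (LinearMap.snd ℝ E ℝ).toPMap (LinearMap.ker (LinearMap.fst ℝ E ℝ))
  obtain ⟨φ, hφ_vertical, hφ_nonneg⟩ := riesz_extension C vertical
    (fun ⟨⟨_, t⟩, hx⟩ ht => nonneg t (LinearMap.mem_ker.1 hx ▸ ht))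
    (fun ⟨v, t⟩ => ⟨⟨(0, K * ‖v‖ - t), rfl⟩, by simpa using norm_mem v⟩)
  let β : E →ₗ[ℝ] ℝ := -φ ∘ₗ LinearMap.inl ℝ E ℝ
  have hφ (p : E × ℝ) : φ p = p.2 - β p.1 := by
    calc φ p = φ (0, p.2) + φ (p.1, 0) := by rw [← map_add]; simp
      _ = p.2 - β p.1 := by
        rw [hφ_vertical ⟨(0, p.2), rfl⟩]
        simp [vertical, β]
  have hβ : ∀ p ∈ C, β p.1 ≤ p.2 := fun p hp => sub_nonneg.1 (hφ p ▸ hφ_nonneg p hp)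
  refine ⟨β.mkContinuous K fun v => abs_le'.2 ⟨hβ _ (norm_mem v), ?_⟩, hβ⟩
  simpa using hβ _ (norm_mem (-v))

theorem exists_continuousLinearMap_sub_le_and_le {S T : PointedCone ℝ (E × ℝ)} {α : E →L[ℝ] ℝ}
    {K : ℝ} (hα : ∀ v r s, (v, r) ∈ S → (v, s) ∈ T → α v ≤ r + s)
    (norm_mem : ∀ v, (v, K * ‖v‖) ∈ T) :
    ∃ β : E →L[ℝ] ℝ, (∀ p ∈ S, (α - β) p.1 ≤ p.2) ∧ ∀ p ∈ T, β p.1 ≤ p.2 := by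
  let reflect : E × ℝ →ₗ[ℝ] E × ℝ :=
    (-LinearMap.fst ℝ E ℝ).prod (LinearMap.snd ℝ E ℝ - α.toLinearMap ∘ₗ LinearMap.fst ℝ E ℝ)
  obtain ⟨β, hβ⟩ :=
    exists_continuousLinearMap_le_of_pointedCone (C := S.map reflect ⊔ T) (K := K) (fun t ht => by
      obtain ⟨_, hx, ⟨v, s⟩, hT, hsum⟩ := Submodule.mem_sup.1 ht
      obtain ⟨⟨w, r⟩, hS, rfl⟩ := PointedCone.mem_map.1 hx
      obtain ⟨hvw, hrs⟩ : v = w ∧ r - α w + s = t := by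
        simpa [reflect, neg_add_eq_zero, eq_comm] using hsum
      linarith [hα w r s hS (hvw ▸ hT)])
    fun v => Submodule.mem_sup_right (norm_mem v)
  refine ⟨β, fun p hp => ?_, fun p hp => hβ p (Submodule.mem_sup_right hp)⟩
  have hreflect : β (-p.1) ≤ p.2 - α p.1 :=
    hβ (reflect p) (Submodule.mem_sup_left (PointedCone.mem_map.2 ⟨p, hp, rfl⟩))
  rw [map_neg] at hreflect
  rw [sub_apply]
  linarith

end HahnBanach

theorem hasBasis_epiBallM {E : Type*} [MetricSpace E] (f : E → EReal) (u : E) (c : ℝ) :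
    (𝓝[{w : E × ℝ | f w.1 ≤ w.2}] (u, c)).HasBasis (0 < ·) (epiBallM f u c) := by
  refine Metric.nhdsWithin_basis_ball.to_hasBasis (fun σ hσ => ⟨σ, hσ, ?_⟩)
    (fun σ hσ => ⟨σ / 2, half_pos hσ, ?_⟩)
  · rintro w ⟨hw, hfw⟩
    refine ⟨?_, hfw⟩
    rw [Metric.mem_ball, Prod.dist_eq, max_lt_iff, Real.dist_eq]
    exact ⟨(Real.le_sqrt_of_sq_le (by nlinarith)).trans_lt hw,
      (Real.le_sqrt_of_sq_le (by rw [sq_abs]; nlinarith)).trans_lt hw⟩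
  · rintro w ⟨hw, hfw⟩
    rw [Metric.mem_ball, Prod.dist_eq, max_lt_iff, Real.dist_eq] at hw
    refine ⟨(Real.sqrt_lt' hσ).2 ?_, hfw⟩
    rw [← sq_abs (w.2 - c)]
    nlinarith [hw.1, hw.2, dist_nonneg (x := w.1) (y := u), abs_nonneg (w.2 - c)]

theorem tendsto_add_smul {ι : Type*} {l : Filter ι} {x y : ι → X} {t : ι → ℝ} {u v : X} {ε : ℝ}
    (hx : Tendsto x l (𝓝 u)) (ht : Tendsto t l (𝓝 0)) (hy : ∀ᶠ i in l, ‖y i - v‖ ≤ ε) :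
    Tendsto (fun i => x i + t i • y i) l (𝓝 u) := by
  have hbdd : IsBoundedUnder (· ≤ ·) l (norm ∘ y) :=
    isBoundedUnder_of_eventually_le (a := ‖v‖ + ε) <| hy.mono fun i hi =>
      (norm_le_norm_add_norm_sub' _ _).trans (by gcongr)
  simpa using hx.add (ht.zero_smul_isBoundedUnder_le hbdd)

section EpiFilter

variable {E : Type*}

theorem hasBasis_epiFilter [MetricSpace E] {f : E → EReal} {u : E} {c : ℝ} :
    (epiFilter f u c).HasBasis (0 < ·) fun δ => epiBallM f u c δ ×ˢ Ioc 0 δ :=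
  (hasBasis_epiBallM f u c).prod_same_index_mono (nhdsGT_basis_Ioc 0)
    (fun _ _ _ _ h _ hw => ⟨hw.1.trans_le h, hw.2⟩) fun _ _ _ _ h => Ioc_subset_Ioc_right h

variable [TopologicalSpace E] {f : E → EReal} {u : E} {c : ℝ}

theorem eventually_epiFilter_le : ∀ᶠ z in epiFilter f u c, f z.1.1 ≤ z.1.2 :=
  tendsto_fst.eventually self_mem_nhdsWithin

theorem tendsto_epiFilter_point : Tendsto (fun z => z.1.1) (epiFilter f u c) (𝓝 u) :=
  (continuous_fst.tendsto (u, c)).comp (tendsto_fst.mono_right nhdsWithin_le_nhds)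

theorem tendsto_epiFilter_level : Tendsto (fun z => z.1.2) (epiFilter f u c) (𝓝 c) :=
  (continuous_snd.tendsto (u, c)).comp (tendsto_fst.mono_right nhdsWithin_le_nhds)

theorem tendsto_epiFilter_time : Tendsto (fun z => z.2) (epiFilter f u c) (𝓝[>] 0) :=
  tendsto_snd

theorem tendsto_epiFilter {ι : Type*} {l : Filter ι} {x : ι → E} {μ t : ι → ℝ}
    (hx : Tendsto x l (𝓝 u)) (hμ : Tendsto μ l (𝓝 c)) (ht : Tendsto t l (𝓝[>] 0))
    (hle : ∀ᶠ i in l, f (x i) ≤ μ i) :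
    Tendsto (fun i => ((x i, μ i), t i)) l (epiFilter f u c) :=
  (tendsto_nhdsWithin_iff.2 ⟨hx.prodMk_nhds hμ, hle⟩).prodMk ht

theorem tendsto_epiFilter_sub {g : E → ℝ} (hg : ContinuousAt g u) :
    Tendsto (fun z => ((z.1.1, z.1.2 - g z.1.1), z.2))
      (epiFilter (fun x => f x + (g x : EReal)) u (c + g u)) (epiFilter f u c) := by
  refine tendsto_epiFilter tendsto_epiFilter_point ?_ tendsto_epiFilter_time ?_
  · have hgw := hg.tendsto.comp
      (tendsto_epiFilter_point (f := fun x => f x + (g x : EReal)) (c := c + g u))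
    simpa using tendsto_epiFilter_level.sub hgw
  · filter_upwards [eventually_epiFilter_le] with z hz
    rw [EReal.coe_sub]
    exact (EReal.le_sub_iff_add_le (by simp) (by simp)).2 hz

end EpiFilter

section DirectionalDerivative

variable {f : X → EReal} {u : X} {c : ℝ}

theorem mem_gdirSetN_iff {v : X} {ε r : ℝ} :
    r ∈ gdirSetN f u c v ε ↔ ∃ S ∈ epiFilter f u c, ∃ ν : (X × ℝ) × ℝ → X, ContinuousOn ν S ∧
      ∀ z ∈ S, ‖ν z - v‖ < ε ∧ f (z.1.1 + z.2 • ν z) ≤ ((z.1.2 + r * z.2 : ℝ) : EReal) := by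
  constructor
  · rintro ⟨δ, hδ, ν, hν, h⟩
    exact ⟨_, hasBasis_epiFilter.mem_of_mem hδ, fun z => ν z.1 z.2, hν,
      fun z hz => h z.1 hz.1 z.2 hz.2⟩
  · rintro ⟨S, hS, ν, hν, h⟩
    obtain ⟨δ, hδ, hδS⟩ := hasBasis_epiFilter.mem_iff.1 hS
    exact ⟨δ, hδ, fun w t => ν (w, t), hν.mono hδS, fun w hw t ht => h (w, t) (hδS ⟨hw, ht⟩)⟩

theorem mem_gdirSetN_of_eventually {v : X} {ε r : ℝ} (hε : 0 < ε)
    (h : ∀ᶠ z in epiFilter f u c, f (z.1.1 + z.2 • v) ≤ ((z.1.2 + r * z.2 : ℝ) : EReal)) :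
    r ∈ gdirSetN f u c v ε :=
  mem_gdirSetN_iff.2 ⟨_, h, fun _ => v, continuousOn_const, fun _ hz => ⟨by simpa using hε, hz⟩⟩

theorem gdirSetN_mono {v : X} {ε ε' r r' : ℝ} (hε : ε ≤ ε') (hr : r ≤ r')
    (h : r ∈ gdirSetN f u c v ε) : r' ∈ gdirSetN f u c v ε' := by
  obtain ⟨δ, hδ, ν, hν, h⟩ := h
  refine ⟨δ, hδ, ν, hν, fun w hw t ht => ?_⟩
  have hrt : r * t ≤ r' * t := mul_le_mul_of_nonneg_right hr ht.1.le
  exact ⟨(h w hw t ht).1.trans_le hε,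
    (h w hw t ht).2.trans (EReal.coe_le_coe_iff.2 (by linarith))⟩

theorem smul_mem_gdirSetN {v : X} {ε r a : ℝ} (ha : 0 < a) (h : r ∈ gdirSetN f u c v ε) :
    a * r ∈ gdirSetN f u c (a • v) (a * ε) := by
  obtain ⟨S, hS, ν, hν, h⟩ := mem_gdirSetN_iff.1 h
  let Φ : (X × ℝ) × ℝ → (X × ℝ) × ℝ := fun z => (z.1, a * z.2)
  have htime : Tendsto (a * ·) (𝓝[>] 0) (𝓝[>] (0 : ℝ)) := by
    refine tendsto_nhdsWithin_iff.2 ⟨?_, eventually_mem_nhdsWithin.mono fun _ => mul_pos ha⟩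
    simpa using (tendsto_id.mono_left (nhdsWithin_le_nhds (a := (0 : ℝ)))).const_mul a
  have hΦ : Tendsto Φ (epiFilter f u c) (epiFilter f u c) :=
    tendsto_epiFilter tendsto_epiFilter_point tendsto_epiFilter_level
      (htime.comp tendsto_epiFilter_time) eventually_epiFilter_le
  have hνΦ : ContinuousOn (fun z => ν (Φ z)) (Φ ⁻¹' S) := hν.comp (by fun_prop) fun _ hz => hz
  refine mem_gdirSetN_iff.2
    ⟨Φ ⁻¹' S, hΦ hS, fun z => a • ν (Φ z), hνΦ.const_smul a, fun z hz => ?_⟩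
  obtain ⟨hνv, hdesc⟩ := h (Φ z) hz
  refine ⟨?_, ?_⟩
  · rw [← smul_sub, norm_smul, Real.norm_of_nonneg ha.le]
    gcongr
  · rw [smul_smul, mul_comm z.2 a, mul_right_comm a r, mul_comm _ r]
    exact hdesc

theorem add_mem_gdirSetN {v₁ v₂ : X} {ε₁ ε₂ r₁ r₂ : ℝ} (h₁ : r₁ ∈ gdirSetN f u c v₁ ε₁)
    (h₂ : r₂ ∈ gdirSetN f u c v₂ ε₂) : r₁ + r₂ ∈ gdirSetN f u c (v₁ + v₂) (ε₁ + ε₂) := by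
  obtain ⟨S₁, hS₁, ν₁, hν₁, h₁⟩ := mem_gdirSetN_iff.1 h₁
  obtain ⟨S₂, hS₂, ν₂, hν₂, h₂⟩ := mem_gdirSetN_iff.1 h₂
  -- The move along `ν₁` stays in the epigraph at level `μ + r₁ t`, so `ν₂` applies there.
  let Φ : (X × ℝ) × ℝ → (X × ℝ) × ℝ := fun z => ((z.1.1 + z.2 • ν₁ z, z.1.2 + r₁ * z.2), z.2)
  have hΦ : Tendsto Φ (epiFilter f u c) (epiFilter f u c) := by
    have htime : Tendsto (fun z => z.2) (epiFilter f u c) (𝓝 0) :=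
      tendsto_epiFilter_time.mono_right nhdsWithin_le_nhds
    refine tendsto_epiFilter ?_ ?_ tendsto_epiFilter_time
      (mem_of_superset hS₁ fun z hz => (h₁ z hz).2)
    · exact tendsto_add_smul tendsto_epiFilter_point htime
        (mem_of_superset hS₁ fun z hz => (h₁ z hz).1.le)
    · simpa using tendsto_epiFilter_level.add (htime.const_mul r₁)
  refine mem_gdirSetN_iff.2 ⟨S₁ ∩ Φ ⁻¹' S₂, inter_mem hS₁ (hΦ hS₂), fun z => ν₁ z + ν₂ (Φ z),
    ?_, fun z hz => ?_⟩
  · have hν₁' : ContinuousOn ν₁ (S₁ ∩ Φ ⁻¹' S₂) := hν₁.mono inter_subset_left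
    exact hν₁'.add (hν₂.comp (by fun_prop) fun _ hz => hz.2)
  · obtain ⟨hνv₁, -⟩ := h₁ z hz.1
    obtain ⟨hνv₂, hdesc⟩ := h₂ (Φ z) hz.2
    refine ⟨?_, ?_⟩
    · rw [add_sub_add_comm]
      exact (norm_add_le _ _).trans_lt (add_lt_add hνv₁ hνv₂)
    · rw [smul_add, ← add_assoc, add_mul, ← add_assoc]
      exact hdesc

theorem gdir_le_coe_iff {v : X} {r : ℝ} :
    gdir f u c v ≤ r ↔ ∀ ε > 0, r + ε ∈ gdirSetN f u c v ε := by
  rw [gdir, iSup_le_iff]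
  constructor
  · intro h ε hε
    have hlt : gdirEps f u c v ε < ((r + ε : ℝ) : EReal) :=
      (h ⟨ε, hε⟩).trans_lt (EReal.coe_lt_coe_iff.2 (lt_add_of_pos_right r hε))
    obtain ⟨_, ⟨q, hq, rfl⟩, hqr⟩ := sInf_lt_iff.1 hlt
    exact gdirSetN_mono le_rfl (EReal.coe_lt_coe_iff.1 hqr).le hq
  · rintro h ⟨ε, hε⟩
    refine EReal.le_of_forall_lt_iff_le.1 fun q hq => sInf_le ⟨q, ?_, rfl⟩
    have hη : 0 < min ε (q - r) := lt_min hε (sub_pos.2 (EReal.coe_lt_coe_iff.1 hq))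
    exact gdirSetN_mono (min_le_left _ _) (by linarith [min_le_right ε (q - r)]) (h _ hη)

theorem gdir_le_coe_of_forall_mul {v : X} {r C : ℝ} (hC : 0 < C)
    (h : ∀ ε > 0, r + C * ε ∈ gdirSetN f u c v (C * ε)) : gdir f u c v ≤ r :=
  gdir_le_coe_iff.2 fun ε hε => by
    simpa [mul_div_cancel₀ ε hC.ne'] using h (ε / C) (div_pos hε hC)

theorem gdir_zero_le : gdir f u c 0 ≤ (0 : ℝ) :=
  gdir_le_coe_iff.2 fun ε hε => mem_gdirSetN_of_eventually hε <| by
    filter_upwards [eventually_epiFilter_le, tendsto_epiFilter_time self_mem_nhdsWithin]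
      with z hz (ht : 0 < z.2)
    rw [smul_zero, add_zero, zero_add]
    exact hz.trans (EReal.coe_le_coe_iff.2 (le_add_of_nonneg_right (mul_pos hε ht).le))

theorem gdir_add_le {v₁ v₂ : X} {r₁ r₂ : ℝ} (h₁ : gdir f u c v₁ ≤ r₁) (h₂ : gdir f u c v₂ ≤ r₂) :
    gdir f u c (v₁ + v₂) ≤ (r₁ + r₂ : ℝ) :=
  gdir_le_coe_of_forall_mul two_pos fun ε hε => by
    have := add_mem_gdirSetN (gdir_le_coe_iff.1 h₁ ε hε) (gdir_le_coe_iff.1 h₂ ε hε)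
    rwa [add_add_add_comm, ← two_mul] at this

theorem gdir_smul_le {v : X} {a r : ℝ} (ha : 0 ≤ a) (h : gdir f u c v ≤ r) :
    gdir f u c (a • v) ≤ (a * r : ℝ) := by
  obtain rfl | ha := ha.eq_or_lt
  · simpa only [zero_smul, zero_mul] using gdir_zero_le
  · refine gdir_le_coe_of_forall_mul ha fun ε hε => ?_
    rw [← mul_add]
    exact smul_mem_gdirSetN ha (gdir_le_coe_iff.1 h ε hε)

variable (f u c) in
/-- The convex cone of pairs `(v, r)` with `f⁰(u;v) ≤ r`, the epigraph of `f⁰(u;·)`. It carries the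
sublinearity of `f⁰(u;·)` without sums of opposite infinities. -/
def gdirCone : PointedCone ℝ (X × ℝ) where
  carrier := {p | gdir f u c p.1 ≤ p.2}
  zero_mem' := gdir_zero_le
  add_mem' := gdir_add_le
  smul_mem' a _ := gdir_smul_le a.2

theorem mem_gdirCone {p : X × ℝ} : p ∈ gdirCone f u c ↔ gdir f u c p.1 ≤ p.2 :=
  Iff.rfl

theorem mem_subdiff_iff {α : X →L[ℝ] ℝ} :
    α ∈ subdiff f u c ↔ ∀ p ∈ gdirCone f u c, α p.1 ≤ p.2 := by
  constructor
  · intro h p hp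
    exact EReal.coe_le_coe_iff.1 ((h p.1).trans (mem_gdirCone.1 hp))
  · intro h v
    refine EReal.le_of_forall_lt_iff_le.1 fun r hr => ?_
    exact EReal.coe_le_coe_iff.2 (h (v, r) (mem_gdirCone.2 hr.le))

end DirectionalDerivative

section Clarke

variable {f : X → EReal} {g : X → ℝ} {u v : X} {c : ℝ} {K : NNReal} {U : Set X}

theorem clarkeDeriv_le_coe_iff {r : ℝ} :
    clarkeDeriv g u v ≤ r ↔
      ∀ ε > 0, ∀ᶠ p in 𝓝 u ×ˢ 𝓝[>] (0 : ℝ), g (p.1 + p.2 • v) ≤ g p.1 + (r + ε) * p.2 := by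
  have hpos : ∀ᶠ p in 𝓝 u ×ˢ 𝓝[>] (0 : ℝ), 0 < p.2 := tendsto_snd self_mem_nhdsWithin
  have slope_le_iff (s : ℝ) {p : X × ℝ} (hp : 0 < p.2) :
      ((p.2⁻¹ * (g (p.1 + p.2 • v) - g p.1) : ℝ) : EReal) ≤ s ↔
        g (p.1 + p.2 • v) ≤ g p.1 + s * p.2 := by
    rw [EReal.coe_le_coe_iff, inv_mul_le_iff₀ hp, sub_le_iff_le_add', mul_comm p.2]
  rw [clarkeDeriv]
  constructor
  · intro h ε hε
    have hlt := h.trans_lt (EReal.coe_lt_coe_iff.2 (lt_add_of_pos_right r hε))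
    filter_upwards [hpos, eventually_lt_of_limsup_lt hlt] with p hp hslope
    exact (slope_le_iff _ hp).1 hslope.le
  · refine fun h => EReal.le_of_forall_lt_iff_le.1 fun s hs => limsup_le_of_le (h := ?_)
    have hrs := EReal.coe_lt_coe_iff.1 hs
    filter_upwards [hpos, h (s - r) (sub_pos.2 hrs)] with p hp hslope
    exact (slope_le_iff s hp).2 (by simpa using hslope)

theorem eventually_abs_sub_le_of_lipschitzOnWith {ι : Type*} {l : Filter ι} {x y : ι → X}
    {t : ι → ℝ} {ε : ℝ} (hU : U ∈ 𝓝 u) (hg : LipschitzOnWith K g U) (hx : Tendsto x l (𝓝 u))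
    (ht : Tendsto t l (𝓝[>] 0)) (hy : ∀ᶠ i in l, ‖y i - v‖ ≤ ε) :
    ∀ᶠ i in l, |g (x i + t i • y i) - g (x i + t i • v)| ≤ K * ε * t i := by
  have ht₀ : Tendsto t l (𝓝 0) := ht.mono_right nhdsWithin_le_nhds
  have hv : Tendsto (fun i => x i + t i • v) l (𝓝 u) := by
    simpa using hx.add (ht₀.smul_const v)
  filter_upwards [tendsto_add_smul hx ht₀ hy hU, hv hU, hy, ht self_mem_nhdsWithin]
    with i hyU hvU hyε (hti : 0 < t i)
  calc |g (x i + t i • y i) - g (x i + t i • v)|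
    _ ≤ K * ‖(x i + t i • y i) - (x i + t i • v)‖ := by
      simpa [Real.dist_eq, dist_eq_norm] using hg.dist_le_mul _ hyU _ hvU
    _ = K * ‖y i - v‖ * t i := by
      rw [add_sub_add_left_eq_sub, ← smul_sub, norm_smul, Real.norm_of_nonneg hti.le]
      ring
    _ ≤ K * ε * t i := by gcongr

theorem clarkeDeriv_le_of_lipschitzOnWith (hU : U ∈ 𝓝 u) (hg : LipschitzOnWith K g U) :
    clarkeDeriv g u v ≤ (K * ‖v‖ : ℝ) := by
  refine clarkeDeriv_le_coe_iff.2 fun ε hε => ?_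
  have hbound := eventually_abs_sub_le_of_lipschitzOnWith (v := v) (y := fun _ => 0) hU hg
    tendsto_fst tendsto_snd (.of_forall fun _ => (by simp : ‖0 - v‖ ≤ ‖v‖))
  filter_upwards [hbound, tendsto_snd self_mem_nhdsWithin] with p hp (ht : 0 < p.2)
  rw [smul_zero, add_zero] at hp
  linarith [neg_le_of_abs_le hp, mul_pos hε ht]

theorem gdir_coe_eq_clarkeDeriv (hU : U ∈ 𝓝 u) (hg : LipschitzOnWith K g U) :
    gdir (fun x => (g x : EReal)) u (g u) v = clarkeDeriv g u v := by
  have le_coe_iff (r : ℝ) :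
      gdir (fun x => (g x : EReal)) u (g u) v ≤ r ↔ clarkeDeriv g u v ≤ r := by
    constructor
    · intro h
      refine clarkeDeriv_le_coe_iff.2 fun ε hε => ?_
      obtain ⟨η, hη, rfl⟩ : ∃ η > 0, η + K * η = ε :=
        ⟨ε / (1 + K), by positivity, by field_simp⟩
      obtain ⟨S, hS, ν, -, hν⟩ := mem_gdirSetN_iff.1 (gdir_le_coe_iff.1 h η hη)
      have hgraph : Tendsto (fun p : X × ℝ => ((p.1, g p.1), p.2)) (𝓝 u ×ˢ 𝓝[>] 0)
          (epiFilter (fun x => (g x : EReal)) u (g u)) :=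
        tendsto_epiFilter tendsto_fst ((hg.continuousOn.continuousAt hU).tendsto.comp tendsto_fst)
          tendsto_snd (.of_forall fun _ => le_rfl)
      filter_upwards [hgraph hS, eventually_abs_sub_le_of_lipschitzOnWith hU hg tendsto_fst
        tendsto_snd (mem_of_superset (hgraph hS) fun p hp => (hν _ hp).1.le)] with p hp hclose
      have hdesc := EReal.coe_le_coe_iff.1 (hν _ hp).2
      linarith [neg_le_of_abs_le hclose]
    · intro h
      refine gdir_le_coe_iff.2 fun ε hε => mem_gdirSetN_of_eventually hε ?_
      filter_upwards [eventually_epiFilter_le, (tendsto_epiFilter_point.prodMk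
        tendsto_epiFilter_time).eventually (clarkeDeriv_le_coe_iff.1 h ε hε)] with z hz hdesc
      exact EReal.coe_le_coe_iff.2 (by linarith [EReal.coe_le_coe_iff.1 hz])
  exact le_antisymm (EReal.le_of_forall_lt_iff_le.1 fun r hr => (le_coe_iff r).2 hr.le)
    (EReal.le_of_forall_lt_iff_le.1 fun r hr => (le_coe_iff r).1 hr.le)

theorem add_mem_gdirSetN_add (hU : U ∈ 𝓝 u) (hg : LipschitzOnWith K g U) {r s ε : ℝ}
    (hf : r ∈ gdirSetN f u c v ε)
    (hgs : ∀ᶠ p in 𝓝 u ×ˢ 𝓝[>] (0 : ℝ), g (p.1 + p.2 • v) ≤ g p.1 + s * p.2) :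
    r + (s + K * ε) ∈ gdirSetN (fun x => f x + (g x : EReal)) u (c + g u) v ε := by
  obtain ⟨S, hS, ν, hν, h⟩ := mem_gdirSetN_iff.1 hf
  let Φ : (X × ℝ) × ℝ → (X × ℝ) × ℝ := fun z => ((z.1.1, z.1.2 - g z.1.1), z.2)
  have hΦ := tendsto_epiFilter_sub (f := f) (c := c) (hg.continuousOn.continuousAt hU)
  let l := epiFilter (fun x => f x + (g x : EReal)) u (c + g u)
  have hpoint : Tendsto (fun z => z.1.1) l (𝓝 u) := tendsto_epiFilter_point
  have htime : Tendsto (fun z => z.2) l (𝓝[>] 0) := tendsto_epiFilter_time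
  have hνv : ∀ᶠ z in l, ‖ν (Φ z) - v‖ ≤ ε := mem_of_superset (hΦ hS) fun z hz => (h _ hz).1.le
  have hincr : ∀ᶠ z in l, z.1.1 ∈ U ∧
      g (z.1.1 + z.2 • ν (Φ z)) ≤ g z.1.1 + (s + K * ε) * z.2 := by
    filter_upwards [hpoint hU, (hpoint.prodMk htime).eventually hgs,
      eventually_abs_sub_le_of_lipschitzOnWith hU hg hpoint htime hνv] with z hzU hdesc hclose
    exact ⟨hzU, by linarith [le_of_abs_le hclose]⟩
  refine mem_gdirSetN_iff.2 ⟨_, inter_mem (hΦ hS) hincr, fun z => ν (Φ z), ?_, fun z hz => ?_⟩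
  · refine hν.comp ?_ fun _ hz => hz.1
    exact .prodMk (.prodMk (by fun_prop) (.sub (by fun_prop)
      (hg.continuousOn.comp (by fun_prop) fun _ hz => hz.2.1))) (by fun_prop)
  · obtain ⟨hνv, hdesc⟩ := h (Φ z) hz.1
    refine ⟨hνv, ?_⟩
    calc f (z.1.1 + z.2 • ν (Φ z)) + (g (z.1.1 + z.2 • ν (Φ z)) : EReal)
      _ ≤ ((z.1.2 - g z.1.1 + r * z.2 : ℝ) : EReal) +
          ((g z.1.1 + (s + K * ε) * z.2 : ℝ) : EReal) :=
        add_le_add hdesc (EReal.coe_le_coe_iff.2 hz.2.2)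
      _ = ((z.1.2 + (r + (s + K * ε)) * z.2 : ℝ) : EReal) := by
        rw [← EReal.coe_add]
        congr 1
        ring

theorem gdir_add_coe_le (hU : U ∈ 𝓝 u) (hg : LipschitzOnWith K g U) {r s : ℝ}
    (hf : gdir f u c v ≤ r) (hgs : clarkeDeriv g u v ≤ s) :
    gdir (fun x => f x + (g x : EReal)) u (c + g u) v ≤ (r + s : ℝ) := by
  refine gdir_le_coe_of_forall_mul (C := 2 + K) (by positivity) fun ε hε => ?_
  have hKε : 0 ≤ K * ε := by positivity
  exact gdirSetN_mono (by linarith) (by linarith)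
    (add_mem_gdirSetN_add hU hg (gdir_le_coe_iff.1 hf ε hε) (clarkeDeriv_le_coe_iff.1 hgs ε hε))

theorem tendsto_inv_smul_sub_of_hasStrictFDerivAt {F : Type*} [NormedAddCommGroup F]
    [NormedSpace ℝ F] {G : X → F} {L : X →L[ℝ] F} (hG : HasStrictFDerivAt G L u) :
    Tendsto (fun p : X × ℝ => p.2⁻¹ • (G (p.1 + p.2 • v) - G p.1)) (𝓝 u ×ˢ 𝓝[≠] 0)
      (𝓝 (L v)) := by
  have htime : Tendsto (fun p : X × ℝ => p.2) (𝓝 u ×ˢ 𝓝[≠] 0) (𝓝 0) :=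
    tendsto_snd.mono_right nhdsWithin_le_nhds
  have hpair : Tendsto (fun p : X × ℝ => (p.1 + p.2 • v, p.1)) (𝓝 u ×ˢ 𝓝[≠] 0) (𝓝 (u, u)) :=
    .prodMk_nhds (by simpa using tendsto_fst.add (htime.smul_const v)) tendsto_fst
  have hcancel : ∀ᶠ p in 𝓝 u ×ˢ 𝓝[≠] (0 : ℝ), p.2⁻¹ • p.2 • v = v := by
    filter_upwards [tendsto_snd self_mem_nhdsWithin] with p hp using inv_smul_smul₀ hp v
  have herror := (Asymptotics.isBigO_refl (fun p : X × ℝ => p.2⁻¹) (𝓝 u ×ˢ 𝓝[≠] 0)).smul_isLittleO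
    (hG.isLittleO.comp_tendsto hpair)
  refine tendsto_sub_nhds_zero_iff.1 ((Asymptotics.isLittleO_one_iff ℝ).1 ?_)
  refine (herror.congr' ?_ ?_).trans_isBigO (Asymptotics.isBigO_const_const v one_ne_zero _)
  · filter_upwards [hcancel] with p hp
    simp only [Function.comp_apply, add_sub_cancel_left]
    rw [smul_sub, ← map_smul, hp]
  · filter_upwards [hcancel] with p hp
    simpa using hp

theorem clarkeDeriv_eq_of_hasStrictFDerivAt {L : X →L[ℝ] ℝ} (hg : HasStrictFDerivAt g L u) :
    clarkeDeriv g u v = (L v : ℝ) := by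
  have hslope := (tendsto_inv_smul_sub_of_hasStrictFDerivAt (v := v) hg).mono_left
    (prod_mono_right _ (nhdsGT_le_nhdsNE 0))
  exact (continuous_coe_real_ereal.continuousAt.tendsto.comp hslope).limsup_eq

end Clarke

section Subdifferential

variable {f : X → EReal} {g : X → ℝ} {u : X} {c : ℝ} {L : X →L[ℝ] ℝ}

theorem subdiff_add_subset {K : NNReal} {U : Set X} (hU : U ∈ 𝓝 u) (hg : LipschitzOnWith K g U) :
    subdiff (fun x => f x + (g x : EReal)) u (c + g u) ⊆
      subdiff f u c + subdiff (fun x => (g x : EReal)) u (g u) := by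
  intro α hα
  have hgdir (v : X) := gdir_coe_eq_clarkeDeriv (v := v) hU hg
  obtain ⟨β, hfβ, hgβ⟩ := exists_continuousLinearMap_sub_le_and_le
    (S := gdirCone f u c) (T := gdirCone (fun x => (g x : EReal)) u (g u)) (α := α) (K := K)
    (fun v r s hr hs => mem_subdiff_iff.1 hα (v, r + s)
      (gdir_add_coe_le hU hg hr ((hgdir v).symm.trans_le hs)))
    (fun v => (hgdir v).trans_le (clarkeDeriv_le_of_lipschitzOnWith hU hg))
  exact ⟨α - β, mem_subdiff_iff.2 hfβ, β, mem_subdiff_iff.2 hgβ, sub_add_cancel α β⟩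

theorem subdiff_coe_eq_singleton (hg : HasStrictFDerivAt g L u) :
    subdiff (fun x => (g x : EReal)) u (g u) = {L} := by
  obtain ⟨K, U, hU, hKU⟩ := hg.exists_lipschitzOnWith
  have hgdir (v : X) : gdir (fun x => (g x : EReal)) u (g u) v = (L v : ℝ) :=
    (gdir_coe_eq_clarkeDeriv hU hKU).trans (clarkeDeriv_eq_of_hasStrictFDerivAt hg)
  refine eq_singleton_iff_unique_mem.2 ⟨fun v => (hgdir v).ge, fun α hα => ?_⟩
  have hle (v : X) : α v ≤ L v := EReal.coe_le_coe_iff.1 ((hα v).trans_eq (hgdir v))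
  exact ContinuousLinearMap.ext fun v => (hle v).antisymm (by simpa using hle (-v))

theorem add_mem_subdiff_add (hg : HasStrictFDerivAt g L u) {α : X →L[ℝ] ℝ}
    (hα : α ∈ subdiff f u c) : α + L ∈ subdiff (fun x => f x + (g x : EReal)) u (c + g u) := by
  obtain ⟨K, U, hU, hKU⟩ := hg.neg.exists_lipschitzOnWith
  have hcancel : (fun x => f x + (g x : EReal) + ((-g x : ℝ) : EReal)) = f := by
    funext x
    rw [EReal.coe_neg, ← sub_eq_add_neg, EReal.add_sub_cancel_right]
  refine mem_subdiff_iff.2 fun p hp => ?_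
  have hle : gdir f u c p.1 ≤ (p.2 + (-L) p.1 : ℝ) := by
    simpa only [Pi.neg_apply, hcancel, add_neg_cancel_right] using
      gdir_add_coe_le hU hKU hp (clarkeDeriv_eq_of_hasStrictFDerivAt hg.neg).le
  have hαL : α p.1 ≤ p.2 + -L p.1 := mem_subdiff_iff.1 hα (p.1, p.2 + (-L) p.1) hle
  rw [add_apply]
  linarith

theorem subdiff_add_subset_of_lipschitz_general (f : X → EReal) (g : X → ℝ) (u : X) (c : ℝ)
    (hc : f u = (c : EReal)) (hg : ∃ K : NNReal, ∃ U ∈ 𝓝 u, LipschitzOnWith K g U) :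
    subdiff (fun x => f x + (g x : EReal)) u (c + g u) ⊆
      subdiff f u c + subdiff (fun x => (g x : EReal)) u (g u) ∧
    ∀ L : X →L[ℝ] ℝ, HasStrictFDerivAt g L u →
      subdiff (fun x => f x + (g x : EReal)) u (c + g u) =
        subdiff f u c + subdiff (fun x => (g x : EReal)) u (g u) ∧
      subdiff (fun x => (g x : EReal)) u (g u) = {L} := by
  obtain ⟨K, U, hU, hKU⟩ := hg
  refine ⟨subdiff_add_subset hU hKU, fun L hL => ⟨?_, subdiff_coe_eq_singleton hL⟩⟩
  refine (subdiff_add_subset hU hKU).antisymm ?_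
  rw [subdiff_coe_eq_singleton hL, add_singleton, image_subset_iff]
  exact fun α hα => add_mem_subdiff_add hL hα

end Subdifferential

/-- Proposition 2.  If `f : X → ℝ ∪ {±∞}`, `u ∈ X` with `f u = c ∈ ℝ` and
`g : X → ℝ` is Lipschitz continuous, then `∂(f+g)(u) ⊆ ∂f(u) + ∂g(u)`.  If moreover `g` is of
class `C¹`, then `∂(f+g)(u) = ∂f(u) + ∂g(u)` and `∂g(u) = {g'(u)}`. -/
theorem subdiff_add_subset_of_lipschitz (f : X → EReal) (g : X → ℝ) (u : X) (c : ℝ)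
    (hc : f u = (c : EReal)) (hg : ∃ K : NNReal, LipschitzWith K g) :
    subdiff (fun x => f x + ((g x : ℝ) : EReal)) u (c + g u) ⊆
      subdiff f u c + subdiff (fun x => ((g x : ℝ) : EReal)) u (g u) ∧
    (ContDiff ℝ 1 g →
      subdiff (fun x => f x + ((g x : ℝ) : EReal)) u (c + g u) =
        subdiff f u c + subdiff (fun x => ((g x : ℝ) : EReal)) u (g u) ∧
      subdiff (fun x => ((g x : ℝ) : EReal)) u (g u) = {fderiv ℝ g u}) := by
  obtain ⟨K, hK⟩ := hg
  obtain ⟨hsub, heq⟩ := subdiff_add_subset_of_lipschitz_general f g u c hc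
    ⟨K, univ, univ_mem, hK.lipschitzOnWith⟩
  exact ⟨hsub, fun hC => heq _ (hC.contDiffAt.hasStrictFDerivAt one_ne_zero)⟩
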